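/- arXiv:2011.14609 — 2 statements merged into one kernel-verified Lean document; each statement's English description precedes it below -/
import Mathlib

section
/- Let m and n be positive integers with n ≥ 4 even, and let 0 ≤ ℓ ≤ n−1 be an integer of the same parity as m. Let G = ⟨t, x, y | t² = 1, x^{n/2} = 1, y^m = x^{(ℓ+m)/2}, txt = x⁻¹, tyt = y⁻¹, xy = yx⟩. Then the honeycomb toroidal graph HTG(m,n,ℓ) is isomorphic to the Cayley graph Cay(G; {t, tx, ty}). -/
namespace HTGPaper

/-- The honeycomb toroidal graph `HTG(m,n,ℓ)`. -/
def HTG (m n ℓ : ℕ) : SimpleGraph (ZMod m × ZMod n) :=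
  SimpleGraph.fromRel (fun v w =>
    (v.1 = w.1 ∧ (w.2 = v.2 + 1 ∨ w.2 = v.2 - 1)) ∨
    (v.1.val ≠ m - 1 ∧ w.1 = v.1 + 1 ∧ w.2 = v.2 ∧ v.1.val % 2 ≠ v.2.val % 2) ∨
    (v.1.val = m - 1 ∧ w.1 = 0 ∧ w.2 = v.2 + (ℓ : ZMod n) ∧ v.2.val % 2 = m % 2))

/-- Generators of the generalized dihedral group `G`. -/
inductive Gen | t | x | y

/-- Relators of the presentation of `G`. -/
def rels (m n ℓ : ℕ) : Set (FreeGroup Gen) :=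
  {FreeGroup.of Gen.t ^ 2,
   FreeGroup.of Gen.x ^ (n / 2),
   FreeGroup.of Gen.y ^ m * (FreeGroup.of Gen.x ^ ((ℓ + m) / 2))⁻¹,
   FreeGroup.of Gen.t * FreeGroup.of Gen.x * (FreeGroup.of Gen.t)⁻¹ * FreeGroup.of Gen.x,
   FreeGroup.of Gen.t * FreeGroup.of Gen.y * (FreeGroup.of Gen.t)⁻¹ * FreeGroup.of Gen.y,
   FreeGroup.of Gen.x * FreeGroup.of Gen.y * (FreeGroup.of Gen.x)⁻¹ * (FreeGroup.of Gen.y)⁻¹}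

/-- The group `G = ⟨t,x,y | t², x^{n/2}, y^m x^{-(ℓ+m)/2}, txt⁻¹x, tyt⁻¹y, [x,y]⟩`. -/
abbrev G (m n ℓ : ℕ) : Type := PresentedGroup (rels m n ℓ)

def gent (m n ℓ : ℕ) : G m n ℓ := PresentedGroup.of Gen.t
def genx (m n ℓ : ℕ) : G m n ℓ := PresentedGroup.of Gen.x
def geny (m n ℓ : ℕ) : G m n ℓ := PresentedGroup.of Gen.y

/-- The connection set `{t, tx, ty}`. -/
def S (m n ℓ : ℕ) : Set (G m n ℓ) :=
  {gent m n ℓ, gent m n ℓ * genx m n ℓ, gent m n ℓ * geny m n ℓ}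

/-- The Cayley graph of a group with respect to a subset. -/
def cayley (H : Type*) [Group H] (T : Set H) : SimpleGraph H :=
  SimpleGraph.fromRel (fun g h => ∃ s ∈ T, h = g * s)

/-- The Cayley graph of an additive group with respect to a subset. -/
def addCayley (H : Type*) [AddGroup H] (T : Set H) : SimpleGraph H :=
  SimpleGraph.fromRel (fun g h => ∃ s ∈ T, h = g + s)

/-- `Cay(H;T)` is a normal Cayley graph of `H` if the left regular representation `H_L`
is a normal subgroup of the automorphism group, i.e. every conjugate of a left
translation by a graph automorphism is again a left translation. -/
def IsNormalCayley (H : Type*) [Group H] (T : Set H) : Prop :=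
  ∀ (f : cayley H T ≃g cayley H T) (a : H), ∃ b : H,
    ∀ g : H, f (a * f.symm g) = b * g

/-- An `s`-arc of a graph: `s+1` vertices, consecutive ones adjacent, and any three
consecutive vertices pairwise distinct. -/
def IsSArc {V : Type*} (Γ : SimpleGraph V) (s : ℕ) (p : Fin (s + 1) → V) : Prop :=
  (∀ i : Fin s, Γ.Adj (p i.castSucc) (p i.succ)) ∧
  ∀ i j : Fin (s + 1), (i : ℕ) + 2 = (j : ℕ) → p i ≠ p j

/-- A graph is `s`-arc-transitive if its automorphism group is transitive on `s`-arcs. -/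
def IsSArcTransitive {V : Type*} (Γ : SimpleGraph V) (s : ℕ) : Prop :=
  ∀ p q : Fin (s + 1) → V, IsSArc Γ s p → IsSArc Γ s q →
    ∃ f : Γ ≃g Γ, ∀ i, f (p i) = q i

/-- A graph is `s`-arc-regular if its automorphism group is regular on `s`-arcs. -/
def IsSArcRegular {V : Type*} (Γ : SimpleGraph V) (s : ℕ) : Prop :=
  ∀ p q : Fin (s + 1) → V, IsSArc Γ s p → IsSArc Γ s q →
    ∃! f : Γ ≃g Γ, ∀ i, f (p i) = q i

/-- A graph is arc-transitive if it is `1`-arc-transitive. -/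
def IsArcTransitive {V : Type*} (Γ : SimpleGraph V) : Prop :=
  IsSArcTransitive Γ 1

/-- The generalized prism `GPr(k)`. -/
def GPr (k : ℕ) : SimpleGraph (ZMod 2 × ZMod (2 * k)) :=
  SimpleGraph.fromRel (fun v w =>
    (v.1 = w.1 ∧ (w.2 = v.2 + 1 ∨ w.2 = v.2 - 1)) ∨
    (Even v.2.val ∧ w.1 = v.1 + 1 ∧ w.2 = v.2 + 1))

/-- The cubic graph on `k` vertices given by LCF-type data `f`. -/
def lcfGraph (k : ℕ) (f : ℕ → ℤ) : SimpleGraph (ZMod k) :=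
  SimpleGraph.fromRel (fun v w => w = v + 1 ∨ w = v + (f v.val : ZMod k))

/-- The cube graph `Q₃`, LCF notation `[3,-3]⁴`. -/
def cubeGraph : SimpleGraph (ZMod 8) :=
  lcfGraph 8 (fun i => if i % 2 = 0 then 3 else -3)

/-- The Heawood graph, LCF notation `[5,-5]⁷`. -/
def heawood : SimpleGraph (ZMod 14) :=
  lcfGraph 14 (fun i => if i % 2 = 0 then 5 else -5)

/-- The Möbius–Kantor graph, LCF notation `[5,-5]⁸`. -/
def mobiusKantor : SimpleGraph (ZMod 16) :=
  lcfGraph 16 (fun i => if i % 2 = 0 then 5 else -5)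

/-- The Pappus graph, LCF notation `[5,7,-7,7,-7,-5]³`. -/
def pappus : SimpleGraph (ZMod 18) :=
  lcfGraph 18 (fun i =>
    match i % 6 with
    | 0 => 5 | 1 => 7 | 2 => -7 | 3 => 7 | 4 => -7 | _ => -5)

/-- The red edges of `HTG(m,n,ℓ) = Cay(G;{t,tx,ty})`. -/
def Red (m n ℓ : ℕ) : Set (Sym2 (G m n ℓ)) :=
  {e | ∃ g : G m n ℓ, e = s(g, g * gent m n ℓ)}

/-- The blue edges. -/
def Blue (m n ℓ : ℕ) : Set (Sym2 (G m n ℓ)) :=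
  {e | ∃ g : G m n ℓ, e = s(g, g * (gent m n ℓ * genx m n ℓ))}

/-- The green edges. -/
def Green (m n ℓ : ℕ) : Set (Sym2 (G m n ℓ)) :=
  {e | ∃ g : G m n ℓ, e = s(g, g * (gent m n ℓ * geny m n ℓ))}

/-- The three color classes. -/
def colorClasses (m n ℓ : ℕ) : Set (Set (Sym2 (G m n ℓ))) :=
  {Red m n ℓ, Blue m n ℓ, Green m n ℓ}

/-- An automorphism of `Cay(G;{t,tx,ty})` is color permuting if it preserves the
partition of the edges into the three color classes. -/
def IsColorPermuting {m n ℓ : ℕ}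
    (f : cayley (G m n ℓ) (S m n ℓ) ≃g cayley (G m n ℓ) (S m n ℓ)) : Prop :=
  ∀ C ∈ colorClasses m n ℓ, Sym2.map ⇑f '' C ∈ colorClasses m n ℓ

/-- The group `Aut(H;T)` of automorphisms of `H` fixing `T` setwise. -/
def autFixing (H : Type*) [Group H] (T : Set H) : Subgroup (MulAut H) where
  carrier := {φ | ⇑φ '' T = T}
  one_mem' := by
    show ⇑(1 : MulAut H) '' T = T
    simp
  mul_mem' := by
    intro a b ha hb
    show ⇑(a * b) '' T = T
    have h : ⇑(a * b) = ⇑a ∘ ⇑b := rfl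
    rw [h, Set.image_comp]
    rw [show ⇑b '' T = T from hb, show ⇑a '' T = T from ha]
  inv_mem' := by
    intro a ha
    show ⇑a⁻¹ '' T = T
    conv_lhs => rw [← show ⇑a '' T = T from ha]
    rw [← Set.image_comp]
    have h : ⇑a⁻¹ ∘ ⇑a = id := by
      funext g
      simp
    rw [h, Set.image_id]

/-!
Both graphs are quotients of the brick wall drawing of the hexagonal tiling on `ℤ × ℤ`. The
infinite generalized dihedral group acts on it: `x` and `y` are the translations by `(0, 2)` and
`(1, 1)`, and `t` is the half-turn `p ↦ (0, 1) - p`. The three edges at the site `g • 0` lead to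
`gt • 0`, `gtx • 0` and `gty • 0`, so the brick wall is the Cayley graph of that group.
The remaining relators `x ^ (n / 2)` and `y ^ m * x ^ (-(ℓ + m) / 2)` are the translations by
`(0, n)` and `(m, -ℓ)`, and modulo these two periods the brick wall becomes `HTG(m,n,ℓ)`.
-/

section BrickWall

/-- One step of the brick wall drawing of the hexagonal tiling on `ℤ × ℤ`: along a vertical line,
or across from a site whose coordinates have different parities. -/
def BrickStep (p q : ℤ × ℤ) : Prop :=
  q = (p.1, p.2 + 1) ∨ Odd (p.1 + p.2) ∧ q = (p.1 + 1, p.2)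

/-- The brick wall: the hexagonal tiling, as a graph on `ℤ × ℤ`. -/
def brickWall : SimpleGraph (ℤ × ℤ) :=
  SimpleGraph.fromRel BrickStep

variable {X V W : Type*}

theorem fromRel_eq_map_fromRel {r : X → X → Prop} {R : V → V → Prop} {f : X → V}
    (hf : Function.Surjective f) (hmap : ∀ p q, r p q → R (f p) (f q))
    (hlift : ∀ p w, R (f p) w → ∃ q, f q = w ∧ (r p q ∨ r q p)) :
    SimpleGraph.fromRel R = (SimpleGraph.fromRel r).map f := by
  ext v w
  simp only [SimpleGraph.map_adj', SimpleGraph.fromRel_adj]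
  refine and_congr_right fun hvw => ⟨?_, ?_⟩
  · obtain ⟨p, rfl⟩ := hf v
    obtain ⟨q, rfl⟩ := hf w
    rintro (h | h)
    · obtain ⟨q', hq', hr⟩ := hlift p _ h
      exact ⟨p, q', ⟨by rintro rfl; exact hvw hq', hr⟩, rfl, hq'⟩
    · obtain ⟨p', hp', hr⟩ := hlift q _ h
      exact ⟨p', q, ⟨by rintro rfl; exact hvw hp'.symm, hr.symm⟩, hp', rfl⟩
  · rintro ⟨p, q, ⟨-, hr⟩, rfl, rfl⟩
    exact hr.imp (hmap p q) (hmap q p)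

theorem nonempty_map_iso_map (Γ : SimpleGraph X) {f : X → V} {g : X → W}
    (hf : Function.Surjective f) (hg : Function.Surjective g)
    (hfg : ∀ p q, f p = f q ↔ g p = g q) : Nonempty (Γ.map f ≃g Γ.map g) := by
  let e : V ≃ W := (Setoid.quotientKerEquivOfSurjective f hf).symm.trans
    ((Quotient.congrRight hfg).trans (Setoid.quotientKerEquivOfSurjective g hg))
  have he (p : X) : e (f p) = g p := by
    have hfp : (Setoid.quotientKerEquivOfSurjective f hf).symm (f p) = Quotient.mk _ p :=
      (Equiv.symm_apply_eq _).2 rfl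
    simp only [e, Equiv.trans_apply, hfp]
    rfl
  refine ⟨⟨e, fun {v w} => ?_⟩⟩
  simp only [SimpleGraph.map_adj', ← he, e.injective.eq_iff, ne_eq]

end BrickWall

section DihedralCover

variable {H : Type*} [Group H]

/-- The relations making `⟨t, x, y⟩` a generalized dihedral group: `x` and `y` commute, and the
involution `t` inverts both. -/
structure IsDihedralTriple (t x y : H) : Prop where
  mul_self : t * t = 1
  semiconj_x : SemiconjBy t x x⁻¹
  semiconj_y : SemiconjBy t y y⁻¹
  commute : Commute x y

/-- The covering of `⟨t, x, y⟩` by the sites of the brick wall. It is chosen so that `x`, `y` and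
`t` act on the left as the translations by `(0, 2)` and `(1, 1)` and as the half-turn
`p ↦ (0, 1) - p`. -/
def brickCover (t x y : H) (p : ℤ × ℤ) : H :=
  y ^ p.1 * x ^ ((p.2 - p.1) / 2) * t ^ ((p.2 - p.1) % 2)

theorem exists_eq_of_even {p : ℤ × ℤ} (hp : Even (p.1 + p.2)) :
    ∃ i c : ℤ, p = (i, i + 2 * c) :=
  ⟨p.1, (p.2 - p.1) / 2, Prod.ext rfl (by grind)⟩

theorem exists_eq_of_odd {p : ℤ × ℤ} (hp : Odd (p.1 + p.2)) :
    ∃ i c : ℤ, p = (i, i + 2 * c + 1) :=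
  ⟨p.1, (p.2 - p.1) / 2, Prod.ext rfl (by grind)⟩

variable (t x y : H)

theorem brickCover_even (i c : ℤ) : brickCover t x y (i, i + 2 * c) = y ^ i * x ^ c := by
  simp [brickCover]

theorem brickCover_odd (i c : ℤ) :
    brickCover t x y (i, i + 2 * c + 1) = y ^ i * x ^ c * t := by
  have hdiv : (i + 2 * c + 1 - i) / 2 = c := by lia
  have hmod : (i + 2 * c + 1 - i) % 2 = 1 := by lia
  simp only [brickCover, hdiv, hmod, zpow_one]

theorem map_brickCover {K : Type*} [Group K] (f : H →* K) (p : ℤ × ℤ) :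
    f (brickCover t x y p) = brickCover (f t) (f x) (f y) p := by
  simp only [brickCover, map_mul, map_zpow]

variable {t x y}

theorem brickCover_up_of_even {p : ℤ × ℤ} (hp : Even (p.1 + p.2)) :
    brickCover t x y (p.1, p.2 + 1) = brickCover t x y p * t := by
  obtain ⟨i, c, rfl⟩ := exists_eq_of_even hp
  rw [brickCover_odd, brickCover_even]

theorem zpow_mul_zpow_mul_brickCover (h : Commute x y) (a b : ℤ) (p : ℤ × ℤ) :
    y ^ a * x ^ b * brickCover t x y p = brickCover t x y (p + (a, a + 2 * b)) := by
  have hdiv : (p.2 + (a + 2 * b) - (p.1 + a)) / 2 = b + (p.2 - p.1) / 2 := by lia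
  have hmod : (p.2 + (a + 2 * b) - (p.1 + a)) % 2 = (p.2 - p.1) % 2 := by lia
  have hcomm : x ^ b * y ^ p.1 = y ^ p.1 * x ^ b := (h.zpow_zpow b p.1).eq
  simp only [brickCover, Prod.fst_add, Prod.snd_add, hdiv, hmod]
  rw [add_comm p.1 a, zpow_add, zpow_add]
  simp only [mul_assoc]
  rw [← mul_assoc (x ^ b), hcomm, mul_assoc]

theorem mul_mul_self_of_semiconjBy_inv (ht : t * t = 1) (h : SemiconjBy t x x⁻¹) :
    t * x * (t * x) = 1 := by
  calc t * x * (t * x) = t * x * (x⁻¹ * t) := by rw [h.eq]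
    _ = 1 := by rw [mul_assoc, mul_inv_cancel_left, ht]

namespace IsDihedralTriple

variable (h : IsDihedralTriple t x y)

include h

theorem mul_self_of_mem {s : H} (hs : s ∈ ({t, t * x, t * y} : Set H)) : s * s = 1 := by
  rcases hs with rfl | rfl | rfl
  · exact h.mul_self
  · exact mul_mul_self_of_semiconjBy_inv h.mul_self h.semiconj_x
  · exact mul_mul_self_of_semiconjBy_inv h.mul_self h.semiconj_y

variable {p : ℤ × ℤ}

theorem brickCover_down_of_even (hp : Even (p.1 + p.2)) :
    brickCover t x y (p.1, p.2 - 1) = brickCover t x y p * (t * x) := by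
  obtain ⟨i, c, rfl⟩ := exists_eq_of_even hp
  have hcoord : i + 2 * c - 1 = i + 2 * (c - 1) + 1 := by ring
  simp only [hcoord, brickCover_odd, brickCover_even]
  rw [h.semiconj_x.eq, zpow_sub_one]
  simp only [mul_assoc]

theorem brickCover_left_of_even (hp : Even (p.1 + p.2)) :
    brickCover t x y (p.1 - 1, p.2) = brickCover t x y p * (t * y) := by
  obtain ⟨i, c, rfl⟩ := exists_eq_of_even hp
  have hcoord : i + 2 * c = i - 1 + 2 * c + 1 := by ring
  have hcomm : x ^ c * y⁻¹ = y⁻¹ * x ^ c := (h.commute.zpow_left c).inv_right.eq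
  rw [brickCover_even]
  simp only [hcoord, brickCover_odd]
  rw [h.semiconj_y.eq, zpow_sub_one, mul_assoc (y ^ i), ← hcomm]
  simp only [mul_assoc]

theorem eq_mul_of_eq_mul_mem {s a b : H} (hs : s ∈ ({t, t * x, t * y} : Set H))
    (hab : a = b * s) : b = a * s := by
  rw [hab, mul_assoc, h.mul_self_of_mem hs, mul_one]

theorem brickCover_down_of_odd (hp : Odd (p.1 + p.2)) :
    brickCover t x y (p.1, p.2 - 1) = brickCover t x y p * t := by
  have hq : Even (p.1 + (p.2 - 1)) := by grind
  refine h.eq_mul_of_eq_mul_mem (by simp) ?_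
  simpa using brickCover_up_of_even (p := (p.1, p.2 - 1)) hq

theorem brickCover_up_of_odd (hp : Odd (p.1 + p.2)) :
    brickCover t x y (p.1, p.2 + 1) = brickCover t x y p * (t * x) := by
  have hq : Even (p.1 + (p.2 + 1)) := by grind
  refine h.eq_mul_of_eq_mul_mem (by simp) ?_
  simpa using h.brickCover_down_of_even (p := (p.1, p.2 + 1)) hq

theorem brickCover_right_of_odd (hp : Odd (p.1 + p.2)) :
    brickCover t x y (p.1 + 1, p.2) = brickCover t x y p * (t * y) := by
  have hq : Even (p.1 + 1 + p.2) := by grind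
  refine h.eq_mul_of_eq_mul_mem (by simp) ?_
  simpa using h.brickCover_left_of_even (p := (p.1 + 1, p.2)) hq

theorem exists_brickCover_eq_mul {q : ℤ × ℤ} (hpq : BrickStep p q) :
    ∃ s ∈ ({t, t * x, t * y} : Set H), brickCover t x y q = brickCover t x y p * s := by
  rcases hpq with rfl | ⟨hp, rfl⟩
  · rcases Int.even_or_odd (p.1 + p.2) with hp | hp
    · exact ⟨t, by simp, brickCover_up_of_even hp⟩
    · exact ⟨t * x, by simp, h.brickCover_up_of_odd hp⟩
  · exact ⟨t * y, by simp, h.brickCover_right_of_odd hp⟩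

theorem exists_brickStep {s : H} (hs : s ∈ ({t, t * x, t * y} : Set H)) (p : ℤ × ℤ) :
    ∃ q, brickCover t x y q = brickCover t x y p * s ∧ (BrickStep p q ∨ BrickStep q p) := by
  have hup : BrickStep p (p.1, p.2 + 1) := Or.inl rfl
  have hdown : BrickStep (p.1, p.2 - 1) p := Or.inl (by simp)
  rcases Int.even_or_odd (p.1 + p.2) with hp | hp
  · have hleft : BrickStep (p.1 - 1, p.2) p := Or.inr ⟨by grind, by simp⟩
    rcases hs with rfl | rfl | rfl
    · exact ⟨_, brickCover_up_of_even hp, Or.inl hup⟩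
    · exact ⟨_, h.brickCover_down_of_even hp, Or.inr hdown⟩
    · exact ⟨_, h.brickCover_left_of_even hp, Or.inr hleft⟩
  · have hright : BrickStep p (p.1 + 1, p.2) := Or.inr ⟨hp, rfl⟩
    rcases hs with rfl | rfl | rfl
    · exact ⟨_, h.brickCover_down_of_odd hp, Or.inr hdown⟩
    · exact ⟨_, h.brickCover_up_of_odd hp, Or.inl hup⟩
    · exact ⟨_, h.brickCover_right_of_odd hp, Or.inl hright⟩

theorem brickCover_surjective (hgen : Subgroup.closure {t, t * x, t * y} = ⊤) :
    Function.Surjective (brickCover t x y) := by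
  have hmul {g s : H} (hs : s ∈ ({t, t * x, t * y} : Set H))
      (hg : ∃ p, brickCover t x y p = g) : ∃ q, brickCover t x y q = g * s := by
    obtain ⟨p, rfl⟩ := hg
    exact (h.exists_brickStep hs p).imp fun _ hq => hq.1
  intro g
  have hg : g ∈ Subgroup.closure {t, t * x, t * y} := hgen ▸ Subgroup.mem_top g
  induction hg using Subgroup.closure_induction_right with
  | one => exact ⟨0, by simp [brickCover]⟩
  | mul_right g _ s hs ih => exact hmul hs ih
  | mul_inv_cancel g _ s hs ih =>
    rw [inv_eq_of_mul_eq_one_left (h.mul_self_of_mem hs)]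
    exact hmul hs ih

theorem cayley_eq_map_brickWall (hgen : Subgroup.closure {t, t * x, t * y} = ⊤) :
    cayley H {t, t * x, t * y} = brickWall.map (brickCover t x y) := by
  refine fromRel_eq_map_fromRel (h.brickCover_surjective hgen)
    (fun p q => h.exists_brickCover_eq_mul) ?_
  rintro p _ ⟨s, hs, rfl⟩
  exact h.exists_brickStep hs p

end IsDihedralTriple

section AffinePerm

variable {A : Type*} [AddCommGroup A]

theorem isDihedralTriple_subLeft_addRight (a b c : A) :
    IsDihedralTriple (Equiv.subLeft c : Equiv.Perm A) (Equiv.addRight a) (Equiv.addRight b) where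
  mul_self := by ext; simp
  semiconj_x := by ext; simp [sub_eq_add_neg, add_comm, add_left_comm]
  semiconj_y := by ext; simp [sub_eq_add_neg, add_comm, add_left_comm]
  commute := by ext; simp [add_right_comm]

theorem brickCover_subLeft_addRight_apply_zero (f : ℤ × ℤ →+ A) (p : ℤ × ℤ) :
    brickCover (Equiv.subLeft (f (0, 1)) : Equiv.Perm A) (Equiv.addRight (f (0, 2)))
      (Equiv.addRight (f (1, 1))) p 0 = f p := by
  rcases Int.even_or_odd (p.1 + p.2) with hp | hp
  · obtain ⟨i, c, rfl⟩ := exists_eq_of_even hp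
    have hsum : c • ((0, 2) : ℤ × ℤ) + i • (1, 1) = (i, i + 2 * c) := by
      ext <;> simp [mul_comm, add_comm]
    rw [brickCover_even, ← hsum, map_add, map_zsmul, map_zsmul]
    simp
  · obtain ⟨i, c, rfl⟩ := exists_eq_of_odd hp
    have hsum : (0, 1) + c • ((0, 2) : ℤ × ℤ) + i • (1, 1) = (i, i + 2 * c + 1) := by
      ext <;> simp [mul_comm, add_comm, add_left_comm]
    rw [brickCover_odd, ← hsum, map_add, map_add, map_zsmul, map_zsmul]
    simp [add_assoc]

end AffinePerm

end DihedralCover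

section Honeycomb

/-- The translations of the brick wall by which `HTG(m,n,ℓ)` is a quotient of it. -/
def periods (m n ℓ : ℕ) : AddSubgroup (ℤ × ℤ) :=
  AddSubgroup.closure {((m : ℤ), -(ℓ : ℤ)), (0, (n : ℤ))}

variable {m n ℓ : ℕ}

theorem mem_periods {z : ℤ × ℤ} :
    z ∈ periods m n ℓ ↔ ∃ a b : ℤ, z.1 = a * m ∧ z.2 = b * n - a * ℓ := by
  rw [periods, AddSubgroup.mem_closure_pair]
  refine exists₂_congr fun a b => ?_
  simp [Prod.ext_iff, eq_comm, neg_add_eq_sub]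

/-- The projection of the brick wall onto the vertices of `HTG(m,n,ℓ)`: passing once around the
first coordinate shifts the second one by `ℓ`. -/
def wrap (m n ℓ : ℕ) (p : ℤ × ℤ) : ZMod m × ZMod n :=
  ((p.1 : ZMod m), ((p.2 + ℓ * (p.1 / m) : ℤ) : ZMod n))

theorem wrap_surjective : Function.Surjective (wrap m n ℓ) := by
  rintro ⟨a, b⟩
  obtain ⟨i, rfl⟩ := ZMod.intCast_surjective a
  obtain ⟨k, rfl⟩ := ZMod.intCast_surjective b
  exact ⟨(i, k - ℓ * (i / m)), by simp [wrap]⟩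

theorem wrap_eq_wrap_iff (hm : 0 < m) {p q : ℤ × ℤ} :
    wrap m n ℓ p = wrap m n ℓ q ↔ q - p ∈ periods m n ℓ := by
  have hdiv {a : ℤ} (ha : q.1 - p.1 = a * m) : q.1 / m = p.1 / m + a := by
    rw [eq_add_of_sub_eq' ha, Int.add_mul_ediv_right _ _ (by lia)]
  simp only [wrap, Prod.mk.injEq, ZMod.intCast_eq_intCast_iff_dvd_sub, mem_periods,
    dvd_iff_exists_eq_mul_left, Prod.fst_sub, Prod.snd_sub, exists_and_left, ← exists_and_right]
  refine exists_congr fun a => and_congr_right fun ha => exists_congr fun b => ?_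
  rw [hdiv ha]
  constructor <;> intro h <;> linarith

theorem wrap_mk_add (p : ℤ × ℤ) (k : ℤ) :
    wrap m n ℓ (p.1, p.2 + k) = ((wrap m n ℓ p).1, (wrap m n ℓ p).2 + (k : ZMod n)) := by
  simp only [wrap, Int.cast_add, add_right_comm]

theorem wrap_right_of_val_ne (hm : 0 < m) {p : ℤ × ℤ} (hp : (wrap m n ℓ p).1.val ≠ m - 1) :
    wrap m n ℓ (p.1 + 1, p.2) = ((wrap m n ℓ p).1 + 1, (wrap m n ℓ p).2) := by
  have : NeZero m := ⟨hm.ne'⟩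
  have hval : ((wrap m n ℓ p).1.val : ℤ) = p.1 % m := ZMod.val_intCast p.1
  have hm' : (0 : ℤ) < m := by lia
  have hdiv : (p.1 + 1) / m = p.1 / m := by
    refine ((Int.ediv_emod_unique (r := p.1 % m + 1) hm').2 ⟨?_, ?_, ?_⟩).1
    · linarith [Int.emod_add_mul_ediv p.1 m]
    · linarith [Int.emod_nonneg p.1 hm'.ne']
    · have := Int.emod_lt_of_pos p.1 hm'
      lia
  simp [wrap, hdiv]

theorem wrap_right_of_val_eq (hm : 0 < m) {p : ℤ × ℤ} (hp : (wrap m n ℓ p).1.val = m - 1) :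
    wrap m n ℓ (p.1 + 1, p.2) = (0, (wrap m n ℓ p).2 + (ℓ : ZMod n)) := by
  have : NeZero m := ⟨hm.ne'⟩
  have hval : ((wrap m n ℓ p).1.val : ℤ) = p.1 % m := ZMod.val_intCast p.1
  have hsucc : p.1 + 1 = (p.1 / m + 1) * m := by
    linarith [Int.mul_ediv_add_emod p.1 m, (by lia : p.1 % m = m - 1)]
  have hdiv : (p.1 + 1) / m = p.1 / m + 1 := by
    rw [hsucc, Int.mul_ediv_cancel _ (by lia)]
  have hfst : ((p.1 + 1 : ℤ) : ZMod m) = 0 := by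
    rw [hsucc, Int.cast_mul, Int.cast_natCast, ZMod.natCast_self, mul_zero]
  ext
  · exact hfst
  · simp only [wrap, hdiv]
    push_cast
    ring

theorem even_val_intCast (hne : Even n) (k : ℤ) : Even (k : ZMod n).val ↔ Even k := by
  rcases n.eq_zero_or_pos with rfl | hn
  · exact Int.natAbs_even
  · have : NeZero n := ⟨hn.ne'⟩
    rw [← Int.even_coe_nat, ZMod.val_intCast, Int.even_iff, Int.even_iff,
      Int.emod_emod_of_dvd k (by exact_mod_cast hne.two_dvd)]

theorem odd_add_iff_val_mod_two_ne (hm : 0 < m) (hne : Even n) (hpar : ℓ % 2 = m % 2)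
    (p : ℤ × ℤ) :
    Odd (p.1 + p.2) ↔ (wrap m n ℓ p).1.val % 2 ≠ (wrap m n ℓ p).2.val % 2 := by
  have : NeZero m := ⟨hm.ne'⟩
  have hfst : ((wrap m n ℓ p).1.val : ℤ) = p.1 - m * (p.1 / m) := by
    rw [wrap, ZMod.val_intCast, Int.emod_def]
  have hsnd : Even (wrap m n ℓ p).2.val ↔ Even (p.2 + ℓ * (p.1 / m)) := even_val_intCast hne _
  have hshift : Even (m * (p.1 / m)) ↔ Even (ℓ * (p.1 / m)) := by
    simp only [Int.even_mul, Int.even_coe_nat, Nat.even_iff, hpar]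
  grind

theorem HTG_eq_map_brickWall (hm : 0 < m) (hne : Even n) (hpar : ℓ % 2 = m % 2) :
    HTG m n ℓ = brickWall.map (wrap m n ℓ) := by
  refine fromRel_eq_map_fromRel wrap_surjective ?_ ?_
  · rintro p _ (rfl | ⟨hodd, rfl⟩)
    · exact Or.inl ⟨rfl, Or.inl (by rw [wrap_mk_add, Int.cast_one])⟩
    · have hval := (odd_add_iff_val_mod_two_ne hm hne hpar p).1 hodd
      by_cases hp : (wrap m n ℓ p).1.val = m - 1
      · rw [wrap_right_of_val_eq hm hp]
        exact Or.inr (Or.inr ⟨hp, rfl, rfl, by lia⟩)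
      · rw [wrap_right_of_val_ne hm hp]
        exact Or.inr (Or.inl ⟨hp, rfl, rfl, hval⟩)
  · rintro p ⟨a, b⟩ (⟨rfl, rfl | rfl⟩ | ⟨hp, rfl, rfl, hval⟩ | ⟨hp, rfl, rfl, hval⟩)
    · exact ⟨(p.1, p.2 + 1), by rw [wrap_mk_add, Int.cast_one], Or.inl (Or.inl rfl)⟩
    · exact ⟨(p.1, p.2 + -1), by rw [wrap_mk_add, Int.cast_neg, Int.cast_one, sub_eq_add_neg],
        Or.inr (Or.inl (by simp))⟩
    · exact ⟨(p.1 + 1, p.2), wrap_right_of_val_ne hm hp,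
        Or.inl (Or.inr ⟨(odd_add_iff_val_mod_two_ne hm hne hpar p).2 hval, rfl⟩)⟩
    · exact ⟨(p.1 + 1, p.2), wrap_right_of_val_eq hm hp,
        Or.inl (Or.inr ⟨(odd_add_iff_val_mod_two_ne hm hne hpar p).2 (by lia), rfl⟩)⟩

end Honeycomb

section Presentation

variable (m n ℓ : ℕ)

theorem genx_pow : genx m n ℓ ^ (n / 2) = 1 :=
  PresentedGroup.one_of_mem (x := FreeGroup.of Gen.x ^ (n / 2)) (by simp [rels])

theorem geny_pow : geny m n ℓ ^ m = genx m n ℓ ^ ((ℓ + m) / 2) :=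
  mul_inv_eq_one.1 <| PresentedGroup.one_of_mem
    (x := FreeGroup.of Gen.y ^ m * (FreeGroup.of Gen.x ^ ((ℓ + m) / 2))⁻¹) (by simp [rels])

theorem isDihedralTriple_gen :
    IsDihedralTriple (gent m n ℓ) (genx m n ℓ) (geny m n ℓ) where
  mul_self := (pow_two _).symm.trans <|
    PresentedGroup.one_of_mem (x := FreeGroup.of Gen.t ^ 2) (by simp [rels])
  semiconj_x := mul_inv_eq_iff_eq_mul.1 <| eq_inv_of_mul_eq_one_left <|
    PresentedGroup.one_of_mem (x := FreeGroup.of Gen.t * FreeGroup.of Gen.x *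
      (FreeGroup.of Gen.t)⁻¹ * FreeGroup.of Gen.x) (by simp [rels])
  semiconj_y := mul_inv_eq_iff_eq_mul.1 <| eq_inv_of_mul_eq_one_left <|
    PresentedGroup.one_of_mem (x := FreeGroup.of Gen.t * FreeGroup.of Gen.y *
      (FreeGroup.of Gen.t)⁻¹ * FreeGroup.of Gen.y) (by simp [rels])
  commute := mul_inv_eq_iff_eq_mul.1 <| mul_inv_eq_one.1 <|
    PresentedGroup.one_of_mem (x := FreeGroup.of Gen.x * FreeGroup.of Gen.y *
      (FreeGroup.of Gen.x)⁻¹ * (FreeGroup.of Gen.y)⁻¹) (by simp [rels])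

theorem closure_S : Subgroup.closure (S m n ℓ) = ⊤ := by
  have ht : gent m n ℓ ∈ Subgroup.closure (S m n ℓ) :=
    Subgroup.subset_closure (by simp [S])
  have htx : gent m n ℓ * genx m n ℓ ∈ Subgroup.closure (S m n ℓ) :=
    Subgroup.subset_closure (by simp [S])
  have hty : gent m n ℓ * geny m n ℓ ∈ Subgroup.closure (S m n ℓ) :=
    Subgroup.subset_closure (by simp [S])
  rw [eq_top_iff, ← PresentedGroup.closure_range_of, Subgroup.closure_le]
  rintro _ ⟨_ | _ | _, rfl⟩
  · exact ht
  · exact (Subgroup.mul_mem_cancel_left _ ht).1 htx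
  · exact (Subgroup.mul_mem_cancel_left _ ht).1 hty

variable {m n ℓ}

/-- The action of the generators of `G` on the torus by two translations and a half-turn. -/
def genPerm (m n ℓ : ℕ) : Gen → Equiv.Perm ((ℤ × ℤ) ⧸ periods m n ℓ)
  | Gen.t => Equiv.subLeft (QuotientAddGroup.mk' (periods m n ℓ) (0, 1))
  | Gen.x => Equiv.addRight (QuotientAddGroup.mk' (periods m n ℓ) (0, 2))
  | Gen.y => Equiv.addRight (QuotientAddGroup.mk' (periods m n ℓ) (1, 1))

theorem lift_genPerm_eq_one (hne : Even n) (hpar : ℓ % 2 = m % 2) :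
    ∀ r ∈ rels m n ℓ, FreeGroup.lift (genPerm m n ℓ) r = 1 := by
  have htriple : IsDihedralTriple (genPerm m n ℓ Gen.t) (genPerm m n ℓ Gen.x)
      (genPerm m n ℓ Gen.y) := isDihedralTriple_subLeft_addRight _ _ _
  have hx : genPerm m n ℓ Gen.x ^ (n / 2) = 1 := by
    have hsnd : (n : ℤ) / 2 * 2 = n := by grind
    have hmem : ((n / 2) • (0, 2) : ℤ × ℤ) ∈ periods m n ℓ :=
      mem_periods.2 ⟨0, 1, by simp, by simp [hsnd]⟩
    rw [← QuotientAddGroup.eq_zero_iff, QuotientAddGroup.mk_nsmul] at hmem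
    simp [genPerm, hmem]
  have hy : genPerm m n ℓ Gen.y ^ m = genPerm m n ℓ Gen.x ^ ((ℓ + m) / 2) := by
    have hsnd : (m : ℤ) - (ℓ + m) / 2 * 2 = -ℓ := by lia
    have hmem : (m • (1, 1) - ((ℓ + m) / 2) • (0, 2) : ℤ × ℤ) ∈ periods m n ℓ :=
      mem_periods.2 ⟨1, 0, by simp, by simp [hsnd]⟩
    rw [← QuotientAddGroup.eq_iff_sub_mem, QuotientAddGroup.mk_nsmul,
      QuotientAddGroup.mk_nsmul] at hmem
    simp [genPerm, hmem]
  rintro r (rfl | rfl | rfl | rfl | rfl | rfl)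
  · simp [pow_two, htriple.mul_self]
  · simp [hx]
  · simp [hy]
  · simp [htriple.semiconj_x.eq]
  · simp [htriple.semiconj_y.eq]
  · simp [htriple.commute.eq]

theorem brickCover_add_of_mem_periods (hne : Even n) (hpar : ℓ % 2 = m % 2) {z : ℤ × ℤ}
    (hz : z ∈ periods m n ℓ) (p : ℤ × ℤ) :
    brickCover (gent m n ℓ) (genx m n ℓ) (geny m n ℓ) (p + z) =
      brickCover (gent m n ℓ) (genx m n ℓ) (geny m n ℓ) p := by
  have htrans := zpow_mul_zpow_mul_brickCover (t := gent m n ℓ) (isDihedralTriple_gen m n ℓ).commute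
  induction hz using AddSubgroup.closure_induction generalizing p with
  | mem z hz =>
    rcases hz with rfl | rfl
    · have hshift : (m : ℤ) + 2 * -((ℓ + m) / 2 : ℕ) = -ℓ := by lia
      simpa only [hshift, zpow_neg, zpow_natCast, geny_pow, mul_inv_cancel, one_mul]
        using (htrans m (-((ℓ + m) / 2 : ℕ)) p).symm
    · have hshift : (0 : ℤ) + 2 * (n / 2 : ℕ) = n := by grind
      simpa only [hshift, zpow_zero, zpow_natCast, genx_pow, one_mul]
        using (htrans 0 (n / 2 : ℕ) p).symm
  | zero => rw [add_zero]
  | add z w _ _ hz hw => rw [← add_assoc, hw, hz]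
  | neg z _ hz => rw [← hz (p + -z), neg_add_cancel_right]

theorem brickCover_gen_eq_iff (hne : Even n) (hpar : ℓ % 2 = m % 2) {p q : ℤ × ℤ} :
    brickCover (gent m n ℓ) (genx m n ℓ) (geny m n ℓ) p =
      brickCover (gent m n ℓ) (genx m n ℓ) (geny m n ℓ) q ↔ q - p ∈ periods m n ℓ := by
  constructor
  · intro h
    let act : G m n ℓ →* Equiv.Perm ((ℤ × ℤ) ⧸ periods m n ℓ) :=
      PresentedGroup.toGroup (lift_genPerm_eq_one hne hpar)
    have hact (p : ℤ × ℤ) :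
        act (brickCover (gent m n ℓ) (genx m n ℓ) (geny m n ℓ) p) 0 =
          QuotientAddGroup.mk' (periods m n ℓ) p := by
      have hgen (c : Gen) : act (PresentedGroup.of c) = genPerm m n ℓ c :=
        PresentedGroup.toGroup.of _
      rw [map_brickCover, gent, genx, geny, hgen, hgen, hgen]
      exact brickCover_subLeft_addRight_apply_zero (QuotientAddGroup.mk' _) p
    have hpq := congrArg (act · 0) h
    simp only [hact] at hpq
    rw [← neg_add_eq_sub]
    exact QuotientAddGroup.eq.1 hpq
  · intro h
    simpa using (brickCover_add_of_mem_periods hne hpar h p).symm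

end Presentation

theorem statement5_general (m n ℓ : ℕ) (hm : 0 < m) (hne : Even n) (hpar : ℓ % 2 = m % 2) :
    Nonempty (HTG m n ℓ ≃g cayley (G m n ℓ) (S m n ℓ)) := by
  have htriple := isDihedralTriple_gen m n ℓ
  have hgen := closure_S m n ℓ
  rw [HTG_eq_map_brickWall hm hne hpar, S, htriple.cayley_eq_map_brickWall hgen]
  refine nonempty_map_iso_map brickWall wrap_surjective (htriple.brickCover_surjective hgen)
    fun p q => ?_
  rw [wrap_eq_wrap_iff hm, brickCover_gen_eq_iff hne hpar]

/-- **Proposition (Alspach–Dean).** `HTG(m,n,ℓ)` is isomorphic to the Cayley graph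
`Cay(G; {t, tx, ty})` of the generalized dihedral group `G`. -/
theorem statement5 (m n ℓ : ℕ) (hm : 0 < m) (hn : 4 ≤ n) (hne : Even n)
    (hl : ℓ ≤ n - 1) (hpar : ℓ % 2 = m % 2) :
    Nonempty (HTG m n ℓ ≃g cayley (G m n ℓ) (S m n ℓ)) := by
  exact statement5_general m n ℓ hm hne hpar

end HTGPaper
end

section
/- Let m and n be positive integers with n ≥ 4 even, let 0 ≤ ℓ ≤ n−1 be an integer of the same parity as m, and let G = ⟨t, x, y | t² = 1, x^{n/2} = 1, y^m = x^{(ℓ+m)/2}, txt = x⁻¹, tyt = y⁻¹, xy = yx⟩. Then there exists an automorphism of G fixing tx and interchanging t with ty if and only if gcd(n, ℓ−m) = 2m and 2mn divides ℓ² − 2mℓ − 3m². -/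
namespace HTGPaper

/-!
An automorphism fixing `tx` and interchanging `t` with `ty` must send `(t, x, y)` to
`(ty, y⁻¹x, y⁻¹)`, and this substitution, which is an involution, defines an automorphism exactly
when the new triple satisfies the defining relations. With `N = n / 2` and `k = (ℓ + m) / 2`, this
amounts to `y ^ N = 1` and `y ^ (2m - k) = 1`. Letting `t` act on `ℤ² / ⟨(N, 0), (k, -m)⟩` by
negation and `x`, `y` by the translations by `(1, 0)`, `(0, 1)` shows that `y ^ j = 1` exactly when
`j = v m` and `N ∣ v k` for some `v`, and what remains is arithmetic.
-/

/-- The defining relations of `G`, for a triple of elements of an arbitrary group, with `N` and `k`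
in the roles of `n / 2` and `(ℓ + m) / 2`. -/
structure DihedralRelations {H : Type*} [Group H] (m N k : ℕ) (t x y : H) : Prop where
  mul_self : t * t = 1
  x_pow : x ^ N = 1
  y_pow : y ^ m = x ^ k
  conj_x : t * x * t⁻¹ = x⁻¹
  conj_y : t * y * t⁻¹ = y⁻¹
  commute : Commute x y

namespace DihedralRelations

variable {H K : Type*} [Group H] [Group K] {m N k : ℕ} {t x y : H}

theorem map (h : DihedralRelations m N k t x y) (f : H →* K) :
    DihedralRelations m N k (f t) (f x) (f y) where
  mul_self := by rw [← map_mul, h.mul_self, map_one]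
  x_pow := by rw [← map_pow, h.x_pow, map_one]
  y_pow := by rw [← map_pow, h.y_pow, map_pow]
  conj_x := by rw [← map_inv, ← map_mul, ← map_mul, h.conj_x, map_inv]
  conj_y := by rw [← map_inv, ← map_mul, ← map_mul, h.conj_y, map_inv]
  commute := h.commute.map f

theorem y_zpow_eq_one_of_dvd (h : DihedralRelations m N k t x y) {v : ℤ} (hv : (N : ℤ) ∣ v * k) :
    y ^ (v * m) = 1 := by
  obtain ⟨u, hu⟩ := hv
  calc y ^ (v * m) = x ^ (v * k) := by
        rw [mul_comm, zpow_mul, zpow_natCast, h.y_pow, ← zpow_natCast, ← zpow_mul, mul_comm]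
    _ = 1 := by rw [hu, zpow_mul, zpow_natCast, h.x_pow, one_zpow]

theorem swap_iff (h : DihedralRelations m N k t x y) :
    DihedralRelations m N k (t * y) (y⁻¹ * x) y⁻¹ ↔ y ^ N = 1 ∧ y ^ (2 * m - k : ℤ) = 1 := by
  have hyx : Commute y⁻¹ x := h.commute.symm.inv_left
  have pow_iff : (y⁻¹ * x) ^ N = 1 ↔ y ^ N = 1 := by
    rw [hyx.mul_pow, h.x_pow, mul_one, inv_pow, inv_eq_one]
  have pow_eq_iff : y⁻¹ ^ m = (y⁻¹ * x) ^ k ↔ y ^ (2 * m - k : ℤ) = 1 := by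
    rw [hyx.mul_pow, ← h.y_pow, inv_pow, inv_pow, eq_inv_mul_iff_mul_eq, mul_inv_eq_iff_eq_mul,
      ← pow_add, zpow_sub, mul_inv_eq_one, eq_comm, ← two_mul]
    norm_cast
  refine ⟨fun h' => ⟨pow_iff.mp h'.x_pow, pow_eq_iff.mp h'.y_pow⟩, fun ⟨hN, hk⟩ => ?_⟩
  exact
    { mul_self :=
        calc t * y * (t * y) = t * y * t⁻¹ * (t * t) * y := by group
          _ = 1 := by rw [h.conj_y, h.mul_self, mul_one, inv_mul_cancel]
      x_pow := pow_iff.mpr hN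
      y_pow := pow_eq_iff.mpr hk
      conj_x :=
        calc t * y * (y⁻¹ * x) * (t * y)⁻¹ = t * x * t⁻¹ * (t * y * t⁻¹)⁻¹ := by group
          _ = (y⁻¹ * x)⁻¹ := by rw [h.conj_x, h.conj_y, mul_inv_rev]
      conj_y :=
        calc t * y * y⁻¹ * (t * y)⁻¹ = (t * y * t⁻¹)⁻¹ := by group
          _ = y⁻¹⁻¹ := by rw [h.conj_y]
      commute := (Commute.refl y⁻¹).mul_left hyx.symm }

end DihedralRelations

theorem dihedralRelations_perm {A : Type*} [AddCommGroup A] {m N k : ℕ} {a b : A}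
    (ha : N • a = 0) (hb : m • b = k • a) :
    DihedralRelations m N k (Equiv.neg A) (Equiv.addRight a) (Equiv.addRight b) where
  mul_self := by ext; simp
  x_pow := by simp [ha]
  y_pow := by simp [hb]
  conj_x := by ext; simp [Equiv.Perm.inv_def, add_comm]
  conj_y := by ext; simp [Equiv.Perm.inv_def, add_comm]
  commute := by ext; simp [add_right_comm]

section Presentation

variable (m n ℓ : ℕ)

theorem dihedralRelations_gen :
    DihedralRelations m (n / 2) ((ℓ + m) / 2) (gent m n ℓ) (genx m n ℓ) (geny m n ℓ) := by
  have rel {r : FreeGroup Gen} (hr : r ∈ rels m n ℓ) : PresentedGroup.mk (rels m n ℓ) r = 1 :=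
    PresentedGroup.one_of_mem hr
  exact
    { mul_self := by
        rw [← pow_two]
        exact rel (r := FreeGroup.of Gen.t ^ 2) (by simp [rels])
      x_pow := rel (r := FreeGroup.of Gen.x ^ (n / 2)) (by simp [rels])
      y_pow := mul_inv_eq_one.mp <|
        rel (r := FreeGroup.of Gen.y ^ m * (FreeGroup.of Gen.x ^ ((ℓ + m) / 2))⁻¹) (by simp [rels])
      conj_x := mul_eq_one_iff_eq_inv.mp <| rel (r := FreeGroup.of Gen.t * FreeGroup.of Gen.x *
        (FreeGroup.of Gen.t)⁻¹ * FreeGroup.of Gen.x) (by simp [rels])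
      conj_y := mul_eq_one_iff_eq_inv.mp <| rel (r := FreeGroup.of Gen.t * FreeGroup.of Gen.y *
        (FreeGroup.of Gen.t)⁻¹ * FreeGroup.of Gen.y) (by simp [rels])
      commute := mul_inv_eq_iff_eq_mul.mp <| mul_inv_eq_one.mp <|
        rel (r := FreeGroup.of Gen.x * FreeGroup.of Gen.y * (FreeGroup.of Gen.x)⁻¹ *
          (FreeGroup.of Gen.y)⁻¹) (by simp [rels]) }

variable {m n ℓ} {H : Type*} [Group H] {t x y : H}

theorem exists_hom_of_dihedralRelations (h : DihedralRelations m (n / 2) ((ℓ + m) / 2) t x y) :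
    ∃ f : G m n ℓ →* H, f (gent m n ℓ) = t ∧ f (genx m n ℓ) = x ∧ f (geny m n ℓ) = y := by
  let g : Gen → H := fun | .t => t | .x => x | .y => y
  have hg : ∀ r ∈ rels m n ℓ, FreeGroup.lift g r = 1 := by
    rintro r (rfl | rfl | rfl | rfl | rfl | rfl) <;>
      simp only [map_mul, map_inv, map_pow, FreeGroup.lift_apply_of, g]
    · rw [pow_two, h.mul_self]
    · exact h.x_pow
    · rw [h.y_pow, mul_inv_cancel]
    · rw [h.conj_x, inv_mul_cancel]
    · rw [h.conj_y, inv_mul_cancel]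
    · rw [h.commute.eq, mul_inv_cancel_right, mul_inv_cancel]
  exact ⟨PresentedGroup.toGroup hg, PresentedGroup.toGroup.of hg, PresentedGroup.toGroup.of hg,
    PresentedGroup.toGroup.of hg⟩

theorem hom_ext {f g : G m n ℓ →* H} (ht : f (gent m n ℓ) = g (gent m n ℓ))
    (hx : f (genx m n ℓ) = g (genx m n ℓ)) (hy : f (geny m n ℓ) = g (geny m n ℓ)) : f = g :=
  PresentedGroup.ext fun | .t => ht | .x => hx | .y => hy

theorem exists_swap_mulAut_iff :
    (∃ φ : MulAut (G m n ℓ),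
        φ (gent m n ℓ * genx m n ℓ) = gent m n ℓ * genx m n ℓ ∧
        φ (gent m n ℓ) = gent m n ℓ * geny m n ℓ ∧
        φ (gent m n ℓ * geny m n ℓ) = gent m n ℓ) ↔
      DihedralRelations m (n / 2) ((ℓ + m) / 2) (gent m n ℓ * geny m n ℓ)
        ((geny m n ℓ)⁻¹ * genx m n ℓ) (geny m n ℓ)⁻¹ := by
  constructor
  · rintro ⟨φ, hx, ht, hy⟩
    rw [map_mul, ht, mul_assoc, mul_right_inj, ← eq_inv_mul_iff_mul_eq] at hx
    rw [map_mul, ht, mul_assoc, mul_eq_left, mul_eq_one_iff_eq_inv'] at hy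
    simpa [ht, hx, hy] using (dihedralRelations_gen m n ℓ).map φ.toMonoidHom
  · intro h
    obtain ⟨f, ht, hx, hy⟩ := exists_hom_of_dihedralRelations h
    have involutive : f.comp f = MonoidHom.id _ := by
      apply hom_ext <;> simp [ht, hx, hy]
    exact ⟨f.toMulEquiv f involutive involutive, by simp [ht, hx], by simp [ht], by simp [ht, hy]⟩

theorem zsmul_eq_zero_of_geny_zpow_eq_one {A : Type*} [AddCommGroup A] {a b : A}
    (ha : (n / 2) • a = 0) (hb : m • b = ((ℓ + m) / 2) • a) {j : ℤ} (hj : geny m n ℓ ^ j = 1) :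
    j • b = 0 := by
  obtain ⟨f, -, -, hy⟩ := exists_hom_of_dihedralRelations (dihedralRelations_perm ha hb)
  have translation_eq_one : Equiv.addRight b ^ j = 1 := by rw [← hy, ← map_zpow, hj, map_one]
  simpa using Equiv.congr_fun translation_eq_one 0

theorem geny_zpow_eq_one_iff {j : ℤ} :
    geny m n ℓ ^ j = 1 ↔
      ∃ v : ℤ, j = v * m ∧ ((n / 2 : ℕ) : ℤ) ∣ v * ((ℓ + m) / 2 : ℕ) := by
  constructor
  · intro hj
    set N := n / 2
    set k := (ℓ + m) / 2
    let L : AddSubgroup (ℤ × ℤ) := AddSubgroup.closure {((N : ℤ), 0), ((k : ℤ), -(m : ℤ))}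
    have mem_L {p : ℤ × ℤ} : p ∈ L ↔ ∃ u v : ℤ, u * N + v * k = p.1 ∧ -(v * m) = p.2 := by
      simp [L, AddSubgroup.mem_closure_pair, Prod.ext_iff]
    have hx : N • (QuotientAddGroup.mk (1, 0) : (ℤ × ℤ) ⧸ L) = 0 := by
      rw [← QuotientAddGroup.mk_nsmul, QuotientAddGroup.eq_zero_iff, mem_L]
      exact ⟨1, 0, by simp, by simp⟩
    have hy : m • (QuotientAddGroup.mk (0, 1) : (ℤ × ℤ) ⧸ L) = k • QuotientAddGroup.mk (1, 0) := by
      rw [← QuotientAddGroup.mk_nsmul, ← QuotientAddGroup.mk_nsmul, QuotientAddGroup.eq, mem_L]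
      exact ⟨0, 1, by simp, by simp⟩
    have hj' := zsmul_eq_zero_of_geny_zpow_eq_one hx hy hj
    rw [← QuotientAddGroup.mk_zsmul, QuotientAddGroup.eq_zero_iff, mem_L] at hj'
    obtain ⟨u, v, huv, hv⟩ := hj'
    have fst_eq_zero : u * N + v * k = 0 := by simpa using huv
    exact ⟨-v, by simpa using hv.symm, u, by linear_combination -fst_eq_zero⟩
  · rintro ⟨v, rfl, hv⟩
    exact (dihedralRelations_gen m n ℓ).y_zpow_eq_one_of_dvd hv

end Presentation

theorem isCoprime_of_dvd_one_sub_sq {R : Type*} [CommRing R] {a b : R} (h : a ∣ 1 - b ^ 2) :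
    IsCoprime a b := by
  obtain ⟨c, hc⟩ := h
  exact ⟨c, b, by linear_combination -hc⟩

theorem exists_multiples_iff_gcd_eq_and_dvd (m : ℕ) (N k : ℤ) :
    ((∃ v : ℤ, N = v * m ∧ N ∣ v * k) ∧ ∃ v : ℤ, 2 * m - k = v * m ∧ N ∣ v * k) ↔
      Int.gcd N (k - m) = m ∧ m * N ∣ (k - 2 * m) * k := by
  constructor
  · rintro ⟨⟨a, rfl, -⟩, w, hw, hdvd⟩
    obtain rfl : k = (2 - w) * m := by linear_combination -hw
    refine ⟨?_, ?_⟩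
    · rcases Nat.eq_zero_or_pos m with rfl | hm
      · simp
      have a_dvd : a ∣ 1 - (1 - w) ^ 2 := by
        rwa [show w * ((2 - w) * (m : ℤ)) = (1 - (1 - w) ^ 2) * m by ring,
          mul_dvd_mul_iff_right (by positivity)] at hdvd
      have gcd_eq_one := Int.isCoprime_iff_gcd_eq_one.mp (isCoprime_of_dvd_one_sub_sq a_dvd)
      rw [show (2 - w) * (m : ℤ) - m = (1 - w) * m by ring, Int.gcd_mul_right, gcd_eq_one]
      simp
    · rw [show ((2 - w) * (m : ℤ) - 2 * m) * ((2 - w) * m) = -(m * (w * ((2 - w) * m))) by ring,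
        dvd_neg]
      exact mul_dvd_mul_left _ hdvd
  · rintro ⟨hgcd, hdvd⟩
    obtain ⟨a, ha⟩ : (m : ℤ) ∣ N := by
      simpa only [hgcd] using Int.gcd_dvd_left N (k - m)
    obtain ⟨b, hb⟩ : (m : ℤ) ∣ k - m := by
      simpa only [hgcd] using Int.gcd_dvd_right N (k - m)
    refine ⟨⟨a, by rw [ha, mul_comm], 1 + b, by rw [ha]; linear_combination a * hb⟩,
      1 - b, by linear_combination -hb, ?_⟩
    rcases eq_or_ne (m : ℤ) 0 with hm | hm
    · have k_eq_zero : k = 0 := by linear_combination hb + (1 + b) * hm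
      simp [k_eq_zero]
    · have factor : (k - 2 * m) * k = -(m * ((1 - b) * k)) := by linear_combination k * hb
      rwa [factor, dvd_neg, mul_dvd_mul_iff_left hm] at hdvd

theorem statement8_general (m n ℓ : ℕ) (hne : Even n) (hpar : ℓ % 2 = m % 2) :
    (∃ φ : MulAut (G m n ℓ),
        φ (gent m n ℓ * genx m n ℓ) = gent m n ℓ * genx m n ℓ ∧
        φ (gent m n ℓ) = gent m n ℓ * geny m n ℓ ∧
        φ (gent m n ℓ * geny m n ℓ) = gent m n ℓ) ↔
      (Int.gcd (n : ℤ) ((ℓ : ℤ) - m) = 2 * m ∧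
        (2 * m * n : ℤ) ∣ ((ℓ : ℤ) ^ 2 - 2 * m * ℓ - 3 * m ^ 2)) := by
  rw [exists_swap_mulAut_iff, (dihedralRelations_gen m n ℓ).swap_iff, ← zpow_natCast,
    geny_zpow_eq_one_iff, geny_zpow_eq_one_iff, exists_multiples_iff_gcd_eq_and_dvd]
  set N := n / 2
  set k := (ℓ + m) / 2
  have hn : (n : ℤ) = 2 * N := mod_cast (Nat.two_mul_div_two_of_even hne).symm
  have hl : (ℓ : ℤ) = 2 * k - m := by omega
  have gcd_eq : Int.gcd (n : ℤ) (ℓ - m) = 2 * Int.gcd (N : ℤ) (k - m) := by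
    rw [hn, hl, show 2 * (k : ℤ) - m - m = 2 * (k - m) by ring, Int.gcd_mul_left]
    rfl
  have modulus_eq : (2 * m * n : ℤ) = 4 * (m * N) := by rw [hn]; ring
  have quadratic_eq : (ℓ : ℤ) ^ 2 - 2 * m * ℓ - 3 * m ^ 2 = 4 * ((k - 2 * m) * k) := by
    rw [hl]; ring
  rw [gcd_eq, modulus_eq, quadratic_eq, mul_dvd_mul_iff_left four_ne_zero,
    Nat.mul_right_inj two_ne_zero]

/-- **Lemma 4.2.** There exists an automorphism of `G` fixing `tx` and interchanging
`t` with `ty` iff `gcd(n,ℓ-m) = 2m` and `2mn ∣ ℓ² - 2mℓ - 3m²`. -/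
theorem statement8 (m n ℓ : ℕ) (hm : 0 < m) (hn : 4 ≤ n) (hne : Even n)
    (hl : ℓ ≤ n - 1) (hpar : ℓ % 2 = m % 2) :
    (∃ φ : MulAut (G m n ℓ),
        φ (gent m n ℓ * genx m n ℓ) = gent m n ℓ * genx m n ℓ ∧
        φ (gent m n ℓ) = gent m n ℓ * geny m n ℓ ∧
        φ (gent m n ℓ * geny m n ℓ) = gent m n ℓ) ↔
      (Int.gcd (n : ℤ) ((ℓ : ℤ) - m) = 2 * m ∧
        (2 * m * n : ℤ) ∣ ((ℓ : ℤ) ^ 2 - 2 * m * ℓ - 3 * m ^ 2)) := by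
  exact statement8_general m n ℓ hne hpar

end HTGPaper
end
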